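/- For all n ≥ 7, the graceful chromatic number of the diagonal ladder DL_n = P_n ⊠ P_2 equals 9. -/

import Mathlib

/-- A graceful `k`-coloring of `G`: a proper vertex coloring with colors in
`{1, ..., k}` whose induced edge coloring `f*(uv) = |f u - f v|` is a proper
edge coloring. -/
def IsGracefulColoring {V : Type*} (G : SimpleGraph V) (k : ℕ) (f : V → ℕ) : Prop :=
  (∀ v, 1 ≤ f v ∧ f v ≤ k) ∧
  (∀ ⦃u v⦄, G.Adj u v → f u ≠ f v) ∧
  (∀ ⦃u v w⦄, G.Adj u v → G.Adj u w → v ≠ w →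
    ((f u : ℤ) - f v).natAbs ≠ ((f u : ℤ) - f w).natAbs)

/-- The graceful chromatic number: the least `k` admitting a graceful `k`-coloring. -/
noncomputable def gracefulChromaticNumber {V : Type*} (G : SimpleGraph V) : ℕ :=
  sInf {k | ∃ f : V → ℕ, IsGracefulColoring G k f}

/-- The diagonal ladder `DL_n` (the strong product `P_n ⊠ P_2`): the closed ladder
together with both diagonals `x_i y_{i+1}` and `y_i x_{i+1}`. -/
def diagonalLadder (n : ℕ) : SimpleGraph (Fin 2 × Fin n) :=
  SimpleGraph.fromRel (fun a b =>
    (a.1 = b.1 ∧ a.2.val + 1 = b.2.val) ∨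
    (a.1 ≠ b.1 ∧ (a.2 = b.2 ∨ a.2.val + 1 = b.2.val ∨ b.2.val + 1 = a.2.val)))

open Finset

theorem diagonalLadder_adj_iff {n : ℕ} {a b : Fin 2 × Fin n} :
    (diagonalLadder n).Adj a b ↔
      a ≠ b ∧ a.2.val ≤ b.2.val + 1 ∧ b.2.val ≤ a.2.val + 1 := by
  obtain ⟨r, i⟩ := a
  obtain ⟨s, j⟩ := b
  simp only [diagonalLadder, SimpleGraph.fromRel_adj, ne_eq, Prod.mk.injEq, Fin.ext_iff]
  omega

/-- The coloring with column pattern `(1, 2), (6, 7), (3, 4), (8, 9)` repeated periodically. -/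
theorem exists_isGracefulColoring_nine (n : ℕ) :
    ∃ f, IsGracefulColoring (diagonalLadder n) 9 f := by
  refine ⟨fun v => 1 + 5 * (v.2.val % 2) + 2 * (v.2.val % 4 / 2) + v.1.val, ?_, ?_, ?_⟩
  · intro v
    have := v.1.isLt
    dsimp only
    omega
  · rintro ⟨r, i⟩ ⟨s, j⟩ h
    simp only [diagonalLadder_adj_iff, ne_eq, Prod.mk.injEq, Fin.ext_iff] at h
    dsimp only
    omega
  · rintro ⟨r, i⟩ ⟨s, j⟩ ⟨t, l⟩ hv hw hvw
    simp only [diagonalLadder_adj_iff, ne_eq, Prod.mk.injEq, Fin.ext_iff] at hv hw hvw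
    have hj : j.val = i.val ∨ j.val = i.val + 1 ∨ j.val + 1 = i.val := by omega
    have hl : l.val = i.val ∨ l.val = i.val + 1 ∨ l.val + 1 = i.val := by omega
    dsimp only
    rcases hj with hj | hj | hj <;> rcases hl with hl | hl | hl <;> omega

/-- The colors in `S` from which at least five distinct nonzero distances to `S` occur. -/
def richColors (S : Finset ℕ) : Finset ℕ :=
  S.filter fun c => 5 ≤ #((S.erase c).image fun d : ℕ => ((c : ℤ) - d).natAbs)

theorem IsGracefulColoring.mem_richColors {V : Type*} {G : SimpleGraph V} {k : ℕ} {f : V → ℕ}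
    (hf : IsGracefulColoring G k f) {S : Finset ℕ} {u : V} (hu : f u ∈ S) {N : Finset V}
    (hcard : 5 ≤ #N) (hadj : ∀ v ∈ N, G.Adj u v) (hS : ∀ v ∈ N, f v ∈ S) :
    f u ∈ richColors S := by
  refine mem_filter.2 ⟨hu, hcard.trans ?_⟩
  refine card_le_card_of_injOn (fun v => ((f u : ℤ) - f v).natAbs) (fun v hv => ?_) ?_
  · exact mem_image_of_mem (fun d : ℕ => ((f u : ℤ) - d).natAbs)
      (mem_erase.2 ⟨(hf.2.1 (hadj v hv)).symm, hS v hv⟩)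
  · intro v hv w hw h
    by_contra hne
    exact hf.2.2 (hadj v hv) (hadj w hw) hne h

theorem exists_five_neighbors {n : ℕ} (u : Fin 2 × Fin n) (hpos : 1 ≤ u.2.val)
    (hlt : u.2.val + 1 < n) :
    ∃ N : Finset (Fin 2 × Fin n), #N = 5 ∧ ∀ v ∈ N, (diagonalLadder n).Adj u v := by
  obtain ⟨r, i⟩ := u
  dsimp only at hpos hlt
  let C : Finset (Fin n) := {⟨i - 1, by omega⟩, i, ⟨i + 1, hlt⟩}
  have hC : #C = 3 := by
    refine card_eq_three.2 ⟨_, _, _, ?_, ?_, ?_, rfl⟩ <;> simp only [ne_eq, Fin.ext_iff] <;> omega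
  refine ⟨(univ ×ˢ C).erase (r, i), ?_, fun v hv => ?_⟩
  · rw [card_erase_of_mem (by simp [C]), card_product, hC]
    simp
  · obtain ⟨hne, hv⟩ := mem_erase.1 hv
    simp only [C, mem_product, mem_univ, mem_insert, mem_singleton, true_and, Fin.ext_iff] at hv
    refine diagonalLadder_adj_iff.2 ⟨hne.symm, ?_⟩
    dsimp only
    omega

theorem IsGracefulColoring.mem_iterate_richColors {n k : ℕ} {f : Fin 2 × Fin n → ℕ}
    (hf : IsGracefulColoring (diagonalLadder n) k f) (m : ℕ) (u : Fin 2 × Fin n)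
    (hm : m ≤ u.2.val) (hmn : u.2.val + m < n) : f u ∈ richColors^[m] (Icc 1 k) := by
  induction m generalizing u with
  | zero => exact mem_Icc.2 (hf.1 u)
  | succ m ih =>
    rw [Function.iterate_succ_apply']
    obtain ⟨N, hN, hadj⟩ := exists_five_neighbors u (by omega) (by omega)
    refine hf.mem_richColors (ih u (by omega) (by omega)) hN.ge hadj fun v hv => ?_
    have := diagonalLadder_adj_iff.1 (hadj v hv)
    exact ih v (by omega) (by omega)

theorem iterate_richColors_Icc_eight : richColors^[3] (Icc 1 8) = ∅ := by
  decide

theorem IsGracefulColoring.mono {V : Type*} {G : SimpleGraph V} {k l : ℕ} {f : V → ℕ}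
    (hf : IsGracefulColoring G k f) (hkl : k ≤ l) : IsGracefulColoring G l f :=
  ⟨fun v => ⟨(hf.1 v).1, (hf.1 v).2.trans hkl⟩, hf.2⟩

theorem gracefulChromaticNumber_diagonalLadder (n : ℕ) (hn : 7 ≤ n) :
    gracefulChromaticNumber (diagonalLadder n) = 9 := by
  refine le_antisymm (Nat.sInf_le (exists_isGracefulColoring_nine n))
    (le_csInf ⟨9, exists_isGracefulColoring_nine n⟩ ?_)
  rintro k ⟨f, hf⟩
  by_contra! hk
  have hmem := (hf.mono (Nat.le_of_lt_succ hk)).mem_iterate_richColors 3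
    (0, ⟨3, by omega⟩) le_rfl hn
  rw [iterate_richColors_Icc_eight] at hmem
  exact notMem_empty _ hmem
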